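/- For every integer n ≥ 0 and every z ∈ ℂ with z ≠ 0 and z^{2N} ≠ 1, the CMV Laurent polynomials ψ_n(z;N) associated to the sieved Jacobi OPUC satisfy the eigenvalue equation z·(d/dz)ψ_n(z;N) + Σ_{k=0}^{N−1} A_k(z;N)·(ψ_n(q^k/z;N) − ψ_n(z;N)) = λ_n(N)·ψ_n(z;N), where λ_n(N) = −n/2 if n is even and λ_n(N) = (n+1)/2 + (α+β+1)N if n is odd. -/

import Mathlib

open Finset

/-- Monic OPUC associated to a sequence of (real) Verblunsky parameters. -/
noncomputable def Phi (c : ℕ → ℝ) : ℕ → ℂ → ℂ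
  | 0, _ => 1
  | n + 1, z => z * Phi c n z - (c n : ℂ) * z ^ n * Phi c n z⁻¹

/-- CMV Laurent polynomials: ψ_{2m} z = z^m Φ_{2m}(1/z), ψ_{2m+1} z = z^{-m} Φ_{2m+1}(z). -/
noncomputable def psi (c : ℕ → ℝ) (n : ℕ) (z : ℂ) : ℂ :=
  if Even n then z ^ (n / 2) * Phi c n z⁻¹
  else z ^ (-((n / 2 : ℕ) : ℤ)) * Phi c n z

/-- Verblunsky parameters of the Jacobi OPUC. -/
noncomputable def jacobiA (α β : ℝ) (n : ℕ) : ℝ :=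
  -(α + 1 / 2 + (-1 : ℝ) ^ (n + 1) * (β + 1 / 2)) / (n + α + β + 2)

/-- Sieved Verblunsky parameters: a_n(N) = a_{k-1} if n = N k - 1 (k ≥ 1), 0 otherwise. -/
noncomputable def sievedA (α β : ℝ) (N n : ℕ) : ℝ :=
  if N ∣ (n + 1) then jacobiA α β ((n + 1) / N - 1) else 0

/-- The primitive N-th root of unity q = exp(2πi/N). -/
noncomputable def qN (N : ℕ) : ℂ := Complex.exp (2 * Real.pi * Complex.I / N)

/-- The coefficients A_k(z;N) of the Dunkl-type operator L(N). -/
noncomputable def Acoef (α β : ℝ) (N k : ℕ) (z : ℂ) : ℂ :=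
  if Even N then
    ((α : ℂ) + β + 1 + (-1 : ℂ) ^ k * ((α : ℂ) - β)) * z ^ 2 / (qN N ^ k - z ^ 2)
  else
    (((α : ℂ) + β + 1) * z ^ 2 +
        (if Even k then qN N ^ ((k : ℤ) / 2) else qN N ^ (((k : ℤ) - (N : ℤ)) / 2)) *
          ((α : ℂ) - β) * z) /
      (qN N ^ k - z ^ 2)

/-- B(z) = N((α+β+1) z^{2N} + (α-β) z^N)/(z^{2N} - 1). -/
noncomputable def Bfun (α β : ℝ) (N : ℕ) (z : ℂ) : ℂ :=
  (N : ℂ) * (((α : ℂ) + β + 1) * z ^ (2 * N) + ((α : ℂ) - β) * z ^ N) / (z ^ (2 * N) - 1)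

/-- The Dunkl-type operator L(N). -/
noncomputable def Lop (α β : ℝ) (N : ℕ) (f : ℂ → ℂ) : ℂ → ℂ := fun z =>
  z * deriv f z + ∑ k ∈ Finset.range N, Acoef α β N k z * (f (qN N ^ k / z) - f z)

/-- A function ℂ∖{0} → ℂ is a Laurent polynomial. -/
def IsLaurentPoly (f : ℂ → ℂ) : Prop :=
  ∃ (m : ℕ) (p : Polynomial ℂ), ∀ z : ℂ, z ≠ 0 → f z = Polynomial.eval z p / z ^ m

/-- Sieved Jacobi polynomial of the first kind, as a function of z (x = z + 1/z). -/
noncomputable def sievP (α β : ℝ) (N n : ℕ) (z : ℂ) : ℂ :=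
  psi (sievedA α β N) (2 * n) z
    + (1 + (sievedA α β N (2 * n - 1) : ℂ)) * psi (sievedA α β N) (2 * n - 1) z

/-- χ_n(z) = (z - 1/z) Q_{n-1}(x(z)), with Q the sieved Jacobi polynomial of 2nd kind. -/
noncomputable def sievChi (α β : ℝ) (N n : ℕ) (z : ℂ) : ℂ :=
  -psi (sievedA α β N) (2 * n) z
    + (1 - (sievedA α β N (2 * n - 1) : ℂ)) * psi (sievedA α β N) (2 * n - 1) z

open Polynomial in
/-- The pair (Φ_k, Φ_k^*) as polynomials. -/
noncomputable def PQ (c : ℕ → ℝ) : ℕ → Polynomial ℂ × Polynomial ℂ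
  | 0 => (1, 1)
  | n + 1 => (X * (PQ c n).1 - C (c n : ℂ) * (PQ c n).2,
      (PQ c n).2 - C (c n : ℂ) * X * (PQ c n).1)

lemma PQ_eval (c : ℕ → ℝ) (k : ℕ) : ∀ w : ℂ, w ≠ 0 →
    (PQ c k).1.eval w = Phi c k w ∧ (PQ c k).2.eval w = w ^ k * Phi c k w⁻¹ := by
  induction k with
  | zero => intro w hw; simp [PQ, Phi]
  | succ k ih =>
    intro w hw
    obtain ⟨h1, h2⟩ := ih w hw
    constructor
    · simp only [PQ, Phi, Polynomial.eval_sub, Polynomial.eval_mul, Polynomial.eval_X,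
        Polynomial.eval_C, h1, h2]
      ring
    · simp only [PQ, Phi, Polynomial.eval_sub, Polynomial.eval_mul, Polynomial.eval_X,
        Polynomial.eval_C, h1, h2, inv_inv, inv_pow]
      generalize Phi c k w⁻¹ = F
      have hwk : w ^ k ≠ 0 := pow_ne_zero _ hw
      rw [pow_succ]
      field_simp

lemma PQ_inv (c : ℕ → ℝ) (k : ℕ) (w : ℂ) (hw : w ≠ 0) :
    (PQ c k).1.eval w⁻¹ * w ^ k = (PQ c k).2.eval w ∧
    (PQ c k).2.eval w⁻¹ * w ^ k = (PQ c k).1.eval w := by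
  rw [(PQ_eval c k w hw).1, (PQ_eval c k w hw).2, (PQ_eval c k _ (inv_ne_zero hw)).1,
    (PQ_eval c k _ (inv_ne_zero hw)).2, inv_inv]
  constructor
  · ring
  · have hwk : w ^ k ≠ 0 := pow_ne_zero _ hw
    rw [inv_pow]
    field_simp

open Polynomial in
lemma PQ_ode (α β : ℝ) (hα : -1 < α) (hβ : -1 < β) (k : ℕ) (u v : ℂ[X])
    (hu : u = if Even k then C ((α : ℂ) + β + 1) + C ((α : ℂ) - β) * X
      else C ((α : ℂ) + β + 1) * X + C ((α : ℂ) - β))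
    (hv : v = if Even k then C ((α : ℂ) + β + 1) * X + C ((α : ℂ) - β)
      else C ((α : ℂ) + β + 1) + C ((α : ℂ) - β) * X) :
    X * derivative (PQ (jacobiA α β) k).1 * (X ^ 2 - 1) =
      (k : ℂ[X]) * (X ^ 2 - 1) * (PQ (jacobiA α β) k).1 + u * (PQ (jacobiA α β) k).2
      - (C ((α : ℂ) + β + 1) + C ((α : ℂ) - β) * X) * (PQ (jacobiA α β) k).1 ∧
    X * derivative (PQ (jacobiA α β) k).2 * (X ^ 2 - 1) =
      X * v * (PQ (jacobiA α β) k).1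
      - X * (C ((α : ℂ) + β + 1) * X + C ((α : ℂ) - β)) * (PQ (jacobiA α β) k).2 := by
  induction k generalizing u v with
  | zero => subst hu hv; simp [PQ]
  | succ k ih =>
    obtain ⟨h1, h2⟩ := ih _ _ rfl rfl
    have ha : (jacobiA α β k : ℂ) * (k + 1 + ((α : ℂ) + β + 1)) =
        - (if Even k then ((α : ℂ) - β) else ((α : ℂ) + β + 1)) := by
      have hd : (k : ℝ) + α + β + 2 ≠ 0 := by
        have : (0 : ℝ) ≤ k := Nat.cast_nonneg k
        linarith
      have : jacobiA α β k * (k + 1 + (α + β + 1)) = - (if Even k then (α - β) else (α + β + 1)) := by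
        unfold jacobiA
        rw [show (k : ℝ) + 1 + (α + β + 1) = k + α + β + 2 by ring, div_mul_cancel₀ _ hd]
        split_ifs with h
        · rw [pow_succ, h.neg_one_pow]; ring
        · rw [pow_succ, (Nat.not_even_iff_odd.mp h).neg_one_pow]; ring
      have h3 := congrArg (fun x : ℝ => (x : ℂ)) this
      split_ifs at h3 ⊢ <;> simpa using h3
    have ha' := congrArg (C : ℂ → ℂ[X]) ha
    simp only [PQ]
    generalize (PQ (jacobiA α β) k).1 = P at *
    generalize (PQ (jacobiA α β) k).2 = Q at *
    generalize (jacobiA α β k : ℂ) = a at *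
    generalize (α : ℂ) + β + 1 = g at *
    generalize (α : ℂ) - β = d at *
    subst hu hv
    simp only [Nat.even_add_one]
    by_cases h : Even k
    · simp only [h, if_true, not_true, if_false, derivative_sub, derivative_mul, derivative_X,
        derivative_C, map_mul, map_add, map_neg, map_natCast, map_one, Nat.cast_add, Nat.cast_one]
          at *
      constructor
      · linear_combination X * h1 - C a * h2 + (X^2-1) * Q * ha'
      · linear_combination h2 - C a * X * h1 - (X^2-1) * X * P * ha'
    · simp only [h, if_true, not_false_eq_true, if_false, derivative_sub, derivative_mul,
        derivative_X,
        derivative_C, map_mul, map_add, map_neg, map_natCast, map_one, Nat.cast_add, Nat.cast_one]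
          at *
      constructor
      · linear_combination X * h1 - C a * h2 + (X^2-1) * Q * ha'
      · linear_combination h2 - C a * X * h1 - (X^2-1) * X * P * ha'

lemma Phi_sieved (α β : ℝ) (N : ℕ) (hN : 1 ≤ N) (n : ℕ) : ∀ k j : ℕ, n = N * k + j → j < N →
    ∀ z : ℂ, z ≠ 0 → Phi (sievedA α β N) n z = z ^ j * Phi (jacobiA α β) k (z ^ N) := by
  induction n with
  | zero =>
    intro k j h hj z hz
    have hj0 : j = 0 := by omega
    have hk : k = 0 := by
      have : N * k = 0 := by omega
      rcases Nat.mul_eq_zero.mp this with h | h <;> omega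
    subst hj0 hk
    simp [Phi]
  | succ n ih =>
    intro k j h hj z hz
    rcases j with _ | j
    · rcases k with _ | k
      · omega
      · have hn : n = N * k + (N - 1) := by rw [Nat.mul_succ] at h; omega
        have h1 := ih k (N - 1) hn (by omega) z hz
        have h2 := ih k (N - 1) hn (by omega) z⁻¹ (inv_ne_zero hz)
        have hc : sievedA α β N n = jacobiA α β k := by
          unfold sievedA
          rw [h, if_pos (by simp)]
          simp [Nat.mul_div_cancel_left _ (show 0 < N by omega)]
        simp only [Phi, h1, h2, hc]
        rw [hn]
        obtain ⟨M, rfl⟩ : ∃ M, N = M + 1 := ⟨N - 1, by omega⟩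
        simp only [Nat.add_sub_cancel, inv_pow]
        field_simp
        ring
    · have h1 := ih k j (by omega) (by omega) z hz
      have hc : sievedA α β N n = 0 := by
        unfold sievedA
        rw [if_neg]
        rw [h, Nat.dvd_add_right (Dvd.intro _ rfl)]
        intro hd
        have := Nat.le_of_dvd (by omega) hd
        omega
      simp only [Phi, h1, hc]
      push_cast
      ring

lemma qN_prim (N : ℕ) (hN : 1 ≤ N) : IsPrimitiveRoot (qN N) N :=
  Complex.isPrimitiveRoot_exp N (by omega)

lemma Tsum (N : ℕ) (hN : 1 ≤ N) (q : ℂ) (hq : IsPrimitiveRoot q N) (x : ℂ) (hx : x ^ N ≠ 1)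
    (r : ℕ) (h1 : 1 ≤ r) (h2 : r ≤ N) :
    ∑ i ∈ Finset.range N, (q ^ i) ^ r / (q ^ i - x) = N * x ^ (r - 1) / (1 - x ^ N) := by
  have hx' : 1 - x ^ N ≠ 0 := sub_ne_zero.mpr (Ne.symm hx)
  rw [eq_div_iff hx', Finset.sum_mul]
  have key : ∀ i ∈ Finset.range N, (q ^ i) ^ r / (q ^ i - x) * (1 - x ^ N) =
      ∑ l ∈ Finset.range N, (q ^ (l + r)) ^ i * x ^ (N - 1 - l) := by
    intro i _
    have hqi : (q ^ i) ^ N = 1 := by rw [← pow_mul, mul_comm, pow_mul, hq.pow_eq_one, one_pow]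
    have hne : q ^ i - x ≠ 0 := by
      intro h
      apply hx
      rw [← sub_eq_zero.mp h, hqi]
    rw [show 1 - x ^ N = (q ^ i) ^ N - x ^ N by rw [hqi], ← Commute.geom_sum₂_mul (Commute.all _ _),
      div_mul_eq_mul_div, div_eq_iff hne, ← mul_assoc, Finset.mul_sum]
    congr 1
    apply Finset.sum_congr rfl
    intro l _
    rw [← mul_assoc]
    congr 1
    ring
  rw [Finset.sum_congr rfl key, Finset.sum_comm, Finset.sum_eq_single (N - r)]
  · rw [← Finset.sum_mul, show N - r + r = N by omega, hq.pow_eq_one,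
      show N - 1 - (N - r) = r - 1 by omega]
    simp
  · intro l hl hne
    rw [Finset.mem_range] at hl
    rw [← Finset.sum_mul]
    have h0 : q ^ (l + r) ≠ 1 := by
      intro h
      obtain ⟨t, ht⟩ := (hq.pow_eq_one_iff_dvd _).mp h
      have : t = 1 := by
        rcases t with _ | _ | t
        · omega
        · rfl
        · exfalso
          have : N * (t + 1 + 1) = N * t + N + N := by ring
          have : 0 ≤ N * t := Nat.zero_le _
          omega
      subst this
      omega
    have : ∑ i ∈ Finset.range N, (q ^ (l + r)) ^ i = 0 := by
      rw [geom_sum_eq h0, ← pow_mul, mul_comm, pow_mul, hq.pow_eq_one]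
      simp
    rw [this, zero_mul]
  · intro h
    exact absurd (Finset.mem_range.mpr (by omega)) h

lemma TsumZ (N : ℕ) (hN : 1 ≤ N) (q : ℂ) (hq : IsPrimitiveRoot q N) (x : ℂ) (hx : x ^ N ≠ 1)
    (r : ℕ) (h1 : 1 ≤ r) (h2 : r ≤ N) (e a : ℤ) (he : e = r + N * a) :
    ∑ i ∈ Finset.range N, (q ^ i) ^ e / (q ^ i - x) = N * x ^ (r - 1) / (1 - x ^ N) := by
  rw [← Tsum N hN q hq x hx r h1 h2]
  apply Finset.sum_congr rfl
  intro i _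
  have hq0 : q ≠ 0 := hq.ne_zero (by omega)
  rw [he, zpow_add₀ (pow_ne_zero _ hq0), zpow_mul, zpow_natCast, zpow_natCast,
    ← pow_mul q i N, mul_comm i N, pow_mul, hq.pow_eq_one]
  simp

lemma Ssum (α β : ℝ) (N : ℕ) (hN : 1 ≤ N) (z : ℂ) (hz : z ≠ 0) (hz2 : z ^ (2 * N) ≠ 1)
    (e a b : ℤ) (E0 E1 : ℕ) (h01 : 1 ≤ E0) (h02 : E0 ≤ 2 * N) (h11 : 1 ≤ E1) (h12 : E1 ≤ 2 * N)
    (h0 : 2 * e = E0 + 2 * (N * a)) (h1 : 2 * e + N = E1 + 2 * (N * b)) :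
    ∑ i ∈ Finset.range N, Acoef α β N i z * (qN N ^ i) ^ e =
      N * (((α : ℂ) + β + 1) * z ^ E0 + ((α : ℂ) - β) * z ^ E1) / (1 - z ^ (2 * N)) := by
  have hq := qN_prim N hN
  have hq0 : qN N ≠ 0 := hq.ne_zero (by omega)
  have hx : (z ^ 2) ^ N ≠ 1 := by rwa [← pow_mul]
  obtain ⟨r0, hr0⟩ : ∃ r0, E0 = 2 * r0 := ⟨E0 / 2, by omega⟩
  have T0 := TsumZ N hN _ hq _ hx r0 (by omega) (by omega) e a (by omega)
  rw [← pow_mul] at T0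
  have hd : 1 - z ^ (2 * N) ≠ 0 := sub_ne_zero.mpr (Ne.symm hz2)
  have e0 : z ^ 2 * (z ^ 2) ^ (r0 - 1) = z ^ E0 := by
    rw [← pow_succ', ← pow_mul]; congr 1; omega
  by_cases hE : Even N
  · obtain ⟨M, hM⟩ := hE
    obtain ⟨r1, hr1⟩ : ∃ r1, E1 = 2 * r1 := ⟨E1 / 2, by omega⟩
    have T1 := TsumZ N hN _ hq _ hx r1 (by omega) (by omega) (e + M) b (by omega)
    rw [← pow_mul] at T1
    have e1 : z ^ 2 * (z ^ 2) ^ (r1 - 1) = z ^ E1 := by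
      rw [← pow_succ', ← pow_mul]; congr 1; omega
    have hqM : qN N ^ M = -1 := by
      unfold qN
      rw [← Complex.exp_nat_mul, ← Complex.exp_pi_mul_I]
      congr 1
      have : (M : ℂ) ≠ 0 := by
        have : M ≠ 0 := by omega
        exact_mod_cast this
      rw [hM]; push_cast
      field_simp
      ring
    rw [← e0, ← e1]
    have : ∀ i ∈ Finset.range N, Acoef α β N i z * (qN N ^ i) ^ e =
        ((α : ℂ) + β + 1) * z ^ 2 * ((qN N ^ i) ^ e / (qN N ^ i - z ^ 2)) +
        ((α : ℂ) - β) * z ^ 2 * ((qN N ^ i) ^ (e + M) / (qN N ^ i - z ^ 2)) := by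
      intro i _
      unfold Acoef
      rw [if_pos ⟨M, hM⟩, zpow_add₀ (pow_ne_zero _ hq0), zpow_natCast, ← pow_mul (qN N) i M,
        mul_comm i M, pow_mul, hqM]
      ring
    rw [Finset.sum_congr rfl this, Finset.sum_add_distrib, ← Finset.mul_sum, ← Finset.mul_sum,
      T0, T1]
    ring
  · obtain ⟨M, hM⟩ := Nat.not_even_iff_odd.mp hE
    obtain ⟨r1, hr1⟩ : ∃ r1, E1 + 1 = 2 * r1 := ⟨(E1 + 1) / 2, by omega⟩
    have T1 := TsumZ N hN _ hq _ hx r1 (by omega) (by omega) (e + (M + 1 : ℕ)) b (by omega)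
    rw [← pow_mul] at T1
    have e1 : z * (z ^ 2) ^ (r1 - 1) = z ^ E1 := by
      rw [← pow_mul, ← pow_succ']; congr 1; omega
    have hqz : qN N ^ (N : ℤ) = 1 := by rw [zpow_natCast, hq.pow_eq_one]
    rw [← e0, ← e1]
    have : ∀ i ∈ Finset.range N, Acoef α β N i z * (qN N ^ i) ^ e =
        ((α : ℂ) + β + 1) * z ^ 2 * ((qN N ^ i) ^ e / (qN N ^ i - z ^ 2)) +
        ((α : ℂ) - β) * z * ((qN N ^ i) ^ (e + (M + 1 : ℕ)) / (qN N ^ i - z ^ 2)) := by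
      intro i _
      have hρ : (if Even i then qN N ^ ((i : ℤ) / 2) else qN N ^ (((i : ℤ) - (N : ℤ)) / 2))
          = (qN N ^ i) ^ (M + 1) := by
        split_ifs with hi
        · obtain ⟨t, ht⟩ := hi
          rw [show (i : ℤ) / 2 = t by omega, ← pow_mul, zpow_natCast,
            show i * (M + 1) = t + N * t by rw [ht, hM]; ring, pow_add, pow_mul, hq.pow_eq_one]
          simp
        · obtain ⟨t, ht⟩ := Nat.not_even_iff_odd.mp hi
          rw [show ((i : ℤ) - N) / 2 = t - M by omega, ← pow_mul, ← zpow_natCast,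
            show ((i * (M + 1) : ℕ) : ℤ) = (t - M) + N * (t + 1) by
              rw [ht, hM]; push_cast; ring, zpow_add₀ hq0, zpow_mul _ (N : ℤ), hqz]
          simp
      unfold Acoef
      rw [if_neg hE, zpow_add₀ (pow_ne_zero _ hq0), zpow_natCast, hρ]
      ring
    rw [Finset.sum_congr rfl this, Finset.sum_add_distrib, ← Finset.mul_sum, ← Finset.mul_sum,
      T0, T1]
    ring

/-- Reduction of the operator on functions `z^a G(z^N)`. -/
lemma Lred (α β : ℝ) (N : ℕ) (hN : 1 ≤ N) (f : ℂ → ℂ) (G : Polynomial ℂ) (a : ℤ)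
    (hf : ∀ z : ℂ, z ≠ 0 → f z = z ^ a * G.eval (z ^ N)) (z : ℂ) (hz : z ≠ 0)
    (hz2 : z ^ (2 * N) ≠ 1) (S : ℂ)
    (hS : ∑ i ∈ Finset.range N, Acoef α β N i z * (qN N ^ i) ^ a = N * S / (1 - z ^ (2 * N))) :
    z * deriv f z + ∑ k ∈ Finset.range N, Acoef α β N k z * (f (qN N ^ k / z) - f z) =
      z ^ a * (a * G.eval (z ^ N) + N * z ^ N * G.derivative.eval (z ^ N))
      + N * S / (1 - z ^ (2 * N)) * (z ^ a)⁻¹ * G.eval (z ^ N)⁻¹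
      - N * (((α : ℂ) + β + 1) * z ^ (2 * N) + ((α : ℂ) - β) * z ^ N) / (1 - z ^ (2 * N))
        * (z ^ a * G.eval (z ^ N)) := by
  have hq := qN_prim N hN
  have hq0 : qN N ≠ 0 := hq.ne_zero (by omega)
  have hder : HasDerivAt f (a * z ^ (a - 1) * G.eval (z ^ N) +
      z ^ a * (G.derivative.eval (z ^ N) * (N * z ^ (N - 1)))) z := by
    have h1 : HasDerivAt (fun z : ℂ => z ^ a * G.eval (z ^ N)) (a * z ^ (a - 1) * G.eval (z ^ N) +
      z ^ a * (G.derivative.eval (z ^ N) * (N * z ^ (N - 1)))) z :=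
      (hasDerivAt_zpow a z (Or.inl hz)).mul
        ((G.hasDerivAt (z ^ N)).comp z (hasDerivAt_pow N z))
    apply h1.congr_of_eventuallyEq
    filter_upwards [isOpen_ne.mem_nhds hz] with y hy
    exact hf y hy
  have S0 := Ssum α β N hN z hz hz2 0 (-1) 0 (2 * N) N (by omega) (by omega) hN (by omega)
    (by push_cast; ring) (by ring)
  simp only [zpow_zero, mul_one] at S0
  have hk : ∀ k ∈ Finset.range N, Acoef α β N k z * (f (qN N ^ k / z) - f z) =
      Acoef α β N k z * (qN N ^ k) ^ a * ((z ^ a)⁻¹ * G.eval (z ^ N)⁻¹) -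
      Acoef α β N k z * (z ^ a * G.eval (z ^ N)) := by
    intro k _
    rw [hf z hz, hf _ (div_ne_zero (pow_ne_zero _ hq0) hz), div_zpow, div_pow, ← pow_mul (qN N) k N,
      mul_comm k N, pow_mul, hq.pow_eq_one, one_pow, one_div]
    ring
  rw [Finset.sum_congr rfl hk, Finset.sum_sub_distrib, ← Finset.sum_mul, ← Finset.sum_mul, hS, S0,
    hder.deriv, zpow_sub_one₀ hz]
  obtain ⟨M, rfl⟩ : ∃ M, N = M + 1 := ⟨N - 1, by omega⟩
  simp only [Nat.add_sub_cancel]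
  have : z * (a * (z ^ a * z⁻¹) * G.eval (z ^ (M + 1)) +
      z ^ a * (G.derivative.eval (z ^ (M + 1)) * (((M + 1 : ℕ) : ℂ) * z ^ M))) =
      z ^ a * (a * G.eval (z ^ (M + 1)) + ((M + 1 : ℕ) : ℂ) * z ^ (M + 1) *
        G.derivative.eval (z ^ (M + 1))) := by
    field_simp
    ring
  rw [this]
  ring

lemma close_aux (A w G G' R H S U T lam a N : ℂ) (k : ℕ) (hA : A ≠ 0)
    (hd : 1 - w ^ 2 ≠ 0) (hR : R * w ^ k = H) (hS : S = A ^ 2 * w ^ k * U)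
    (h : (a - lam) * G * (1 - w ^ 2) + N * w * G' * (1 - w ^ 2) + N * U * H - N * T * G = 0) :
    A * (a * G + N * w * G') + N * S / (1 - w ^ 2) * A⁻¹ * R - N * T / (1 - w ^ 2) * (A * G)
      = lam * (A * G) := by
  subst hS hR
  field_simp
  linear_combination h

/-- the CMV Laurent polynomials ψ_n(z;N) associated to the sieved Jacobi
OPUC satisfy the eigenvalue equation L(N) ψ_n(·;N) = λ_n(N) ψ_n(·;N). -/
theorem stmt_11 (α β : ℝ) (hα : -1 < α) (hβ : -1 < β) (N : ℕ) (hN : 1 ≤ N) (n : ℕ)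
    (z : ℂ) (hz : z ≠ 0) (hz2 : z ^ (2 * N) ≠ 1) :
    z * deriv (psi (sievedA α β N) n) z
      + ∑ k ∈ Finset.range N, Acoef α β N k z *
          (psi (sievedA α β N) n (qN N ^ k / z) - psi (sievedA α β N) n z)
      = (if Even n then -(n : ℂ) / 2 else ((n : ℂ) + 1) / 2 + ((α : ℂ) + β + 1) * N)
        * psi (sievedA α β N) n z := by
  obtain ⟨k, j, hn, hj⟩ : ∃ k j, n = N * k + j ∧ j < N :=
    ⟨n / N, n % N, (Nat.div_add_mod n N).symm, Nat.mod_lt _ (by omega)⟩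
  have hPhi := Phi_sieved α β N hN n k j hn hj
  have hw : z ^ N ≠ 0 := pow_ne_zero _ hz
  have hd : 1 - z ^ (2 * N) ≠ 0 := sub_ne_zero.mpr (Ne.symm hz2)
  obtain ⟨hi1, hi2⟩ := PQ_inv (jacobiA α β) k (z ^ N) hw
  obtain ⟨o1, o2⟩ := PQ_ode α β hα hβ k _ _ rfl rfl
  have o1' := congrArg (Polynomial.eval (z ^ N)) o1
  have o2' := congrArg (Polynomial.eval (z ^ N)) o2
  have hww : z ^ (2 * N) = (z ^ N) ^ 2 := by rw [← pow_mul, mul_comm]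
  by_cases hev : Even n
  · obtain ⟨m, hm⟩ := hev
    have hm2 : n / 2 = m := by omega
    have hf : ∀ y : ℂ, y ≠ 0 → psi (sievedA α β N) n y =
        y ^ (-(m : ℤ)) * (PQ (jacobiA α β) k).2.eval (y ^ N) := by
      intro y hy
      unfold psi
      rw [if_pos ⟨m, hm⟩, hm2, hPhi _ (inv_ne_zero hy), (PQ_eval _ k _ (pow_ne_zero _ hy)).2,
        inv_pow, inv_pow, zpow_neg, zpow_natCast, ← pow_mul y N k]
      have : y ^ m * y ^ m = y ^ (N * k) * y ^ j := by rw [← pow_add, ← pow_add, ← hn, hm]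
      generalize Phi (jacobiA α β) k (y ^ N)⁻¹ = F
      field_simp
      linear_combination F * this
    have hzm : z ^ m * z ^ m = (z ^ N) ^ k * z ^ j := by
      rw [← pow_add, ← pow_mul, ← pow_add, ← hn, hm]
    have hj1 : z ^ (2 * N - j) * z ^ j = (z ^ N) ^ 2 := by
      rw [← pow_add, ← pow_mul]; congr 1; omega
    have hj2 : z ^ (N - j) * z ^ j = z ^ N := by
      rw [← pow_add]; congr 1; omega
    rw [if_pos ⟨m, hm⟩]
    have hmc : (n : ℂ) = m + m := by rw [hm]; push_cast; ring
    by_cases hk : Even k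
    · have hk' := hk
      obtain ⟨p, hp⟩ := hk
      have hnp : (n : ℤ) = 2 * (N * p) + j := by rw [hn, hp]; push_cast; ring
      have hS := Ssum α β N hN z hz hz2 (-(m : ℤ)) (-p - 1) (-p) (2 * N - j) (N - j)
        (by omega) (by omega) (by omega) (by omega)
        (by simp only [mul_sub, mul_neg, mul_one]; omega) (by simp only [mul_sub, mul_neg, mul_one]; omega)
      rw [Lred α β N hN _ _ _ hf z hz hz2 _ hS, hf z hz, hww]
      rw [hww] at hd
      simp only [hk', if_true, if_false, Polynomial.eval_mul, Polynomial.eval_X,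
        Polynomial.eval_sub, Polynomial.eval_add, Polynomial.eval_C, Polynomial.eval_pow,
        Polynomial.eval_one, Polynomial.eval_natCast] at o2'
      refine close_aux _ _ _ _ _ _ _ (z ^ N * (((α : ℂ) + β + 1) * z ^ N + ((α : ℂ) - β))) _ _ _ _ k (zpow_ne_zero _ hz) hd hi2 ?_ ?_
      · rw [zpow_neg, zpow_natCast]
        have hzj : z ^ j ≠ 0 := pow_ne_zero _ hz
        have e1 := eq_div_of_mul_eq hzj hj1
        have e2 := eq_div_of_mul_eq hzj hj2
        have e3 : ((z ^ m)⁻¹) ^ 2 = ((z ^ N) ^ k * z ^ j)⁻¹ := by rw [← hzm, inv_pow, pow_two]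
        have hwk : (z ^ N) ^ k ≠ 0 := pow_ne_zero _ hw
        rw [e1, e2, e3]
        generalize (z ^ N) ^ k = W at *
        generalize z ^ N = w at *
        field_simp
      · rw [hmc]; push_cast
        linear_combination (-(N : ℂ)) * o2'
    · have hk' := hk
      obtain ⟨p, hp⟩ := Nat.not_even_iff_odd.mp hk
      have hnp : (n : ℤ) = 2 * (N * p) + N + j := by rw [hn, hp]; push_cast; ring
      have hS := Ssum α β N hN z hz hz2 (-(m : ℤ)) (-p - 1) (-p - 1) (N - j) (2 * N - j)
        (by omega) (by omega) (by omega) (by omega)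
        (by simp only [mul_sub, mul_neg, mul_one]; omega) (by simp only [mul_sub, mul_neg, mul_one]; omega)
      rw [Lred α β N hN _ _ _ hf z hz hz2 _ hS, hf z hz, hww]
      rw [hww] at hd
      simp only [hk', if_true, if_false, Polynomial.eval_mul, Polynomial.eval_X,
        Polynomial.eval_sub, Polynomial.eval_add, Polynomial.eval_C, Polynomial.eval_pow,
        Polynomial.eval_one, Polynomial.eval_natCast] at o2'
      refine close_aux _ _ _ _ _ _ _ (z ^ N * (((α : ℂ) + β + 1) + ((α : ℂ) - β) * z ^ N)) _ _ _ _ k (zpow_ne_zero _ hz) hd hi2 ?_ ?_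
      · rw [zpow_neg, zpow_natCast]
        have hzj : z ^ j ≠ 0 := pow_ne_zero _ hz
        have e1 := eq_div_of_mul_eq hzj hj1
        have e2 := eq_div_of_mul_eq hzj hj2
        have e3 : ((z ^ m)⁻¹) ^ 2 = ((z ^ N) ^ k * z ^ j)⁻¹ := by rw [← hzm, inv_pow, pow_two]
        have hwk : (z ^ N) ^ k ≠ 0 := pow_ne_zero _ hw
        rw [e1, e2, e3]
        generalize (z ^ N) ^ k = W at *
        generalize z ^ N = w at *
        field_simp
      · rw [hmc]; push_cast
        linear_combination (-(N : ℂ)) * o2'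
  · have hev' := hev
    obtain ⟨m, hm⟩ := Nat.not_even_iff_odd.mp hev
    have hm2 : n / 2 = m := by omega
    have hf : ∀ y : ℂ, y ≠ 0 → psi (sievedA α β N) n y =
        y ^ ((j : ℤ) - m) * (PQ (jacobiA α β) k).1.eval (y ^ N) := by
      intro y hy
      unfold psi
      rw [if_neg hev, hm2, hPhi _ hy, (PQ_eval _ k _ (pow_ne_zero _ hy)).1, zpow_sub₀ hy,
        zpow_neg, zpow_natCast, zpow_natCast]
      ring
    have hzm : z ^ m * z ^ m * z = (z ^ N) ^ k * z ^ j := by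
      rw [← pow_add, ← pow_succ, ← pow_mul, ← pow_add, ← hn, hm]; congr 1; omega
    have hj2 : z ^ (N + j + 1) = z ^ N * z ^ j * z := by ring
    rw [if_neg hev]
    have hmc : (n : ℂ) = 2 * m + 1 := by rw [hm]; push_cast; ring
    by_cases hk : Even k
    · have hk' := hk
      obtain ⟨p, hp⟩ := hk
      have hnp : (n : ℤ) = 2 * (N * p) + j := by rw [hn, hp]; push_cast; ring
      have hS := Ssum α β N hN z hz hz2 ((j : ℤ) - m) (-p) (-p) (j + 1) (N + j + 1)
        (by omega) (by omega) (by omega) (by omega)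
        (by push_cast; simp only [mul_sub, mul_neg, mul_one]; omega) (by push_cast; simp only [mul_sub, mul_neg, mul_one]; omega)
      rw [Lred α β N hN _ _ _ hf z hz hz2 _ hS, hf z hz, hww]
      rw [hww] at hd
      simp only [hk', if_true, if_false, Polynomial.eval_mul, Polynomial.eval_X,
        Polynomial.eval_sub, Polynomial.eval_add, Polynomial.eval_C, Polynomial.eval_pow,
        Polynomial.eval_one, Polynomial.eval_natCast] at o1'
      refine close_aux _ _ _ _ _ _ _ (((α : ℂ) + β + 1) + ((α : ℂ) - β) * z ^ N) _ _ _ _ k (zpow_ne_zero _ hz) hd hi1 ?_ ?_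
      · rw [zpow_sub₀ hz, zpow_natCast, zpow_natCast, div_pow, pow_two (z ^ m)]
        have hzj : z ^ j ≠ 0 := pow_ne_zero _ hz
        have hzm0 : z ^ m ≠ 0 := pow_ne_zero _ hz
        rw [hj2, pow_succ]
        rw [div_mul_eq_mul_div, div_mul_eq_mul_div, eq_div_iff (mul_ne_zero hzm0 hzm0)]
        generalize (z ^ N) ^ k = W at *
        generalize z ^ N = w at *
        generalize z ^ m = v at *
        generalize z ^ j = y at *
        linear_combination ((((α : ℂ) + β + 1) + ((α : ℂ) - β) * w) * y) * hzm
      · have hmc' : (n : ℂ) = N * k + j := by rw [hn]; push_cast; ring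
        have hmj : (2 * m : ℂ) + 1 = N * k + j := by rw [← hmc', hmc]
        rw [hmc]; push_cast
        linear_combination (-(N : ℂ)) * o1' + (- (PQ (jacobiA α β) k).1.eval (z ^ N) * (1 - (z ^ N) ^ 2)) * hmj
    · have hk' := hk
      obtain ⟨p, hp⟩ := Nat.not_even_iff_odd.mp hk
      have hnp : (n : ℤ) = 2 * (N * p) + N + j := by rw [hn, hp]; push_cast; ring
      have hS := Ssum α β N hN z hz hz2 ((j : ℤ) - m) (-p - 1) (-p) (N + j + 1) (j + 1)
        (by omega) (by omega) (by omega) (by omega)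
        (by push_cast; simp only [mul_sub, mul_neg, mul_one]; omega) (by push_cast; simp only [mul_sub, mul_neg, mul_one]; omega)
      rw [Lred α β N hN _ _ _ hf z hz hz2 _ hS, hf z hz, hww]
      rw [hww] at hd
      simp only [hk', if_true, if_false, Polynomial.eval_mul, Polynomial.eval_X,
        Polynomial.eval_sub, Polynomial.eval_add, Polynomial.eval_C, Polynomial.eval_pow,
        Polynomial.eval_one, Polynomial.eval_natCast] at o1'
      refine close_aux _ _ _ _ _ _ _ (((α : ℂ) + β + 1) * z ^ N + ((α : ℂ) - β)) _ _ _ _ k (zpow_ne_zero _ hz) hd hi1 ?_ ?_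
      · rw [zpow_sub₀ hz, zpow_natCast, zpow_natCast, div_pow, pow_two (z ^ m)]
        have hzj : z ^ j ≠ 0 := pow_ne_zero _ hz
        have hzm0 : z ^ m ≠ 0 := pow_ne_zero _ hz
        rw [hj2, pow_succ]
        rw [div_mul_eq_mul_div, div_mul_eq_mul_div, eq_div_iff (mul_ne_zero hzm0 hzm0)]
        generalize (z ^ N) ^ k = W at *
        generalize z ^ N = w at *
        generalize z ^ m = v at *
        generalize z ^ j = y at *
        linear_combination ((((α : ℂ) + β + 1) * w + ((α : ℂ) - β)) * y) * hzm
      · have hmc' : (n : ℂ) = N * k + j := by rw [hn]; push_cast; ring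
        have hmj : (2 * m : ℂ) + 1 = N * k + j := by rw [← hmc', hmc]
        rw [hmc]; push_cast
        linear_combination (-(N : ℂ)) * o1' + (- (PQ (jacobiA α β) k).1.eval (z ^ N) * (1 - (z ^ N) ^ 2)) * hmj
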